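/- The ratio P_R / 2^R is strictly decreasing in the block size: for every natural number t, P_{2^{t+1}} / 2^{2^{t+1}} < P_{2^t} / 2^{2^t} (as real numbers). -/

import Mathlib

/-!
Write `N = 2 ^ t`. Cut a set `S ⊆ {0, …, 2N - 1}` into its lower half `S ∩ {0, …, N - 1}` and its
upper half shifted down by `N`. The pair determines `S`, and if `S` lies in `UR (2N)` then its
upper half lies in `UR N`, since adding the leading bit `N` preserves domination. Hence
`S ↦ (lower, upper)` injects `UR (2N)` into `𝒫 {0, …, N - 1} × UR N`. The pair `({0}, ∅)` is not
attained: an `S` with empty upper half misses `2N - 1`, so it is empty. Therefore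
`Pcount (2N) < 2 ^ N * Pcount N` (`Pcount_succ_lt`), which is the claim after division by `2 ^ (2N)`.
-/

/-- `i` binary-dominates `j`: every binary digit of `j` is at most that of `i`. -/
def Dom (i j : ℕ) : Prop := ∀ k, Nat.testBit j k = true → Nat.testBit i k = true

/-- A finite set of naturals is domination contiguous. -/
def DomContiguous (S : Finset ℕ) : Prop :=
  ∀ h ∈ S, ∀ j ∈ S, ∀ i : ℕ, Dom h i → Dom i j → i ∈ S

open scoped Classical in
/-- `UR R`: the family of subsets `S ⊆ {0,...,R−1}` that are domination contiguous
and satisfy: if `S` is nonempty then `R−1 ∈ S`. -/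
noncomputable def UR (R : ℕ) : Finset (Finset ℕ) :=
  (Finset.range R).powerset.filter
    (fun S => DomContiguous S ∧ (S.Nonempty → R - 1 ∈ S))

/-- `Pcount R` is the number of admissible frozen-bit patterns on a block of size `R`. -/
noncomputable def Pcount (R : ℕ) : ℕ := (UR R).card

theorem Dom.le {i j : ℕ} (h : Dom i j) : j ≤ i := by
  have e : j &&& i = j := by
    apply Nat.eq_of_testBit_eq
    intro k
    have := h k
    rw [Nat.testBit_and]
    cases hj : j.testBit k <;> simp_all
  rw [← e]
  exact Nat.and_le_right

/-- Adding the same leading bit to both sides preserves domination. -/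
theorem Dom.two_pow_add {t i j : ℕ} (hi : i < 2 ^ t) (hj : j < 2 ^ t) (h : Dom i j) :
    Dom (2 ^ t + i) (2 ^ t + j) := by
  have key : ∀ x < 2 ^ t, 2 ^ t + x = 2 ^ t ||| x := fun x hx => by
    simpa using Nat.two_pow_add_eq_or_of_lt hx 1
  intro k
  rw [key i hi, key j hj, Nat.testBit_or, Nat.testBit_or, Bool.or_eq_true, Bool.or_eq_true]
  exact Or.imp_right (h k)

/-- The upper half of `S`, shifted down by `N`. -/
def upperHalf (N : ℕ) (S : Finset ℕ) : Finset ℕ := (Finset.range N).filter (fun i => N + i ∈ S)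

theorem mem_upperHalf {N i : ℕ} {S : Finset ℕ} : i ∈ upperHalf N S ↔ i < N ∧ N + i ∈ S := by
  simp [upperHalf]

theorem mem_UR {R : ℕ} {S : Finset ℕ} :
    S ∈ UR R ↔ S ⊆ Finset.range R ∧ DomContiguous S ∧ (S.Nonempty → R - 1 ∈ S) := by
  simp [UR]

theorem top_mem_upperHalf {t : ℕ} {S : Finset ℕ} (hS : S ∈ UR (2 ^ (t + 1))) (hne : S.Nonempty) :
    2 ^ t - 1 ∈ upperHalf (2 ^ t) S := by
  have hpos : 0 < 2 ^ t := by positivity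
  have h := (mem_UR.1 hS).2.2 hne
  refine mem_upperHalf.2 ⟨by omega, ?_⟩
  have e : 2 ^ t + (2 ^ t - 1) = 2 ^ (t + 1) - 1 := by rw [pow_succ]; omega
  rwa [e]

theorem upperHalf_mem_UR {t : ℕ} {S : Finset ℕ} (hS : S ∈ UR (2 ^ (t + 1))) :
    upperHalf (2 ^ t) S ∈ UR (2 ^ t) := by
  refine mem_UR.2 ⟨Finset.filter_subset _ _, ?_, ?_⟩
  · intro h hh j hj i hi ij
    obtain ⟨h1, h2⟩ := mem_upperHalf.1 hh
    obtain ⟨j1, j2⟩ := mem_upperHalf.1 hj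
    have i1 : i < 2 ^ t := hi.le.trans_lt h1
    exact mem_upperHalf.2
      ⟨i1, (mem_UR.1 hS).2.1 _ h2 _ j2 _ (hi.two_pow_add h1 i1) (ij.two_pow_add i1 j1)⟩
  · rintro ⟨i, hi⟩
    exact top_mem_upperHalf hS ⟨_, (mem_upperHalf.1 hi).2⟩

theorem Pcount_succ_lt (t : ℕ) : Pcount (2 ^ (t + 1)) < 2 ^ (2 ^ t) * Pcount (2 ^ t) := by
  classical
  set N := 2 ^ t with hN
  have hpos : 0 < N := by positivity
  have h2 : 2 ^ (t + 1) = N + N := by rw [pow_succ]; omega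
  let f : Finset ℕ → Finset ℕ × Finset ℕ := fun S => (S ∩ Finset.range N, upperHalf N S)
  have hinj : Set.InjOn f (UR (2 ^ (t + 1))) := by
    intro S hS T hT hST
    have hl : S ∩ Finset.range N = T ∩ Finset.range N := congrArg Prod.fst hST
    have hu : upperHalf N S = upperHalf N T := congrArg Prod.snd hST
    ext i
    by_cases hi : i < N
    · have := Finset.ext_iff.1 hl i
      simpa [hi] using this
    · by_cases hi2 : i < N + N
      · have := Finset.ext_iff.1 hu (i - N)
        rw [mem_upperHalf, mem_upperHalf, Nat.add_sub_cancel' (not_lt.1 hi)] at this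
        have hlt : i - N < N := by omega
        simpa [hlt] using this
      · have outside : ∀ X ∈ UR (2 ^ (t + 1)), i ∉ X := fun X hX hiX => by
          have := Finset.mem_range.1 ((mem_UR.1 hX).1 hiX)
          omega
        exact iff_of_false (outside S hS) (outside T hT)
  have hss : (UR (2 ^ (t + 1))).image f ⊂ (Finset.range N).powerset ×ˢ UR N := by
    refine (Finset.ssubset_iff_of_subset ?_).2 ⟨({0}, ∅), ?_, ?_⟩
    · intro p hp
      obtain ⟨S, hS, rfl⟩ := Finset.mem_image.1 hp
      exact Finset.mem_product.2
        ⟨Finset.mem_powerset.2 Finset.inter_subset_right, upperHalf_mem_UR hS⟩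
    · simp [mem_UR, DomContiguous, hpos]
    · intro hp
      obtain ⟨S, hS, hf⟩ := Finset.mem_image.1 hp
      have hl : S ∩ Finset.range N = {0} := congrArg Prod.fst hf
      have hu : upperHalf N S = ∅ := congrArg Prod.snd hf
      have h0 : 0 ∈ S ∩ Finset.range N := by simp [hl]
      have htop := top_mem_upperHalf hS ⟨0, (Finset.mem_inter.1 h0).1⟩
      rw [← hN, hu] at htop
      simp at htop
  have hcard := Finset.card_lt_card hss
  rwa [Finset.card_image_of_injOn hinj, Finset.card_product, Finset.card_powerset,
    Finset.card_range] at hcard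

theorem Pcount_ratio_strictAnti (t : ℕ) :
    (Pcount (2 ^ (t + 1)) : ℝ) / 2 ^ (2 ^ (t + 1)) <
      (Pcount (2 ^ t) : ℝ) / 2 ^ (2 ^ t) := by
  have h : (Pcount (2 ^ (t + 1)) : ℝ) < 2 ^ (2 ^ t) * Pcount (2 ^ t) := by
    exact_mod_cast Pcount_succ_lt t
  have e : (2 : ℝ) ^ (2 ^ (t + 1)) = 2 ^ (2 ^ t) * 2 ^ (2 ^ t) := by
    rw [← pow_add, pow_succ, mul_two]
  have hpos : (0 : ℝ) < 2 ^ (2 ^ t) := by positivity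
  rw [e, ← div_div, div_lt_div_iff_of_pos_right hpos, div_lt_iff₀ hpos, mul_comm]
  exact h
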